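/- Let x⃗ = a_1 x⃗_1 + ⋯ + a_n x⃗_n + a c⃗ be an element of 𝕃 written in normal form, i.e. with 0 ≤ a_i < p_i for all i and a ∈ ℤ. Then x⃗ belongs to 𝕃_+ if and only if a ≥ 0. -/

import Mathlib

/-- The subgroup of relations `p i • x⃗_i − c⃗` inside the free abelian group
`(Fin n → ℤ) × ℤ` on the generators `x⃗_1, …, x⃗_n, c⃗`. -/
def GLrels (n : ℕ) (p : Fin n → ℕ) : AddSubgroup ((Fin n → ℤ) × ℤ) :=
  AddSubgroup.closure (Set.range fun i : Fin n => ((Pi.single i (p i : ℤ), -1) : (Fin n → ℤ) × ℤ))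

/-- The grading group `𝕃 = ⟨x⃗_1, …, x⃗_n, c⃗⟩ / ⟨p_i x⃗_i − c⃗⟩`. -/
abbrev GLgroup (n : ℕ) (p : Fin n → ℕ) : Type :=
  ((Fin n → ℤ) × ℤ) ⧸ GLrels n p

/-- The generator `x⃗_i` of `𝕃`. -/
def GLx (n : ℕ) (p : Fin n → ℕ) (i : Fin n) : GLgroup n p :=
  QuotientAddGroup.mk (Pi.single i 1, 0)

/-- The generator `c⃗` of `𝕃`. -/
def GLc (n : ℕ) (p : Fin n → ℕ) : GLgroup n p :=
  QuotientAddGroup.mk (0, 1)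

/-- The positive cone `𝕃_+`: the submonoid of `𝕃` generated by `x⃗_1, …, x⃗_n` and `c⃗`. -/
def GLplus (n : ℕ) (p : Fin n → ℕ) : AddSubmonoid (GLgroup n p) :=
  AddSubmonoid.closure ({GLc n p} ∪ Set.range (GLx n p))

theorem GLrels_exists (n : ℕ) (p : Fin n → ℕ) (r : (Fin n → ℤ) × ℤ) (hr : r ∈ GLrels n p) :
    ∃ k : Fin n → ℤ, (∀ i, r.1 i = k i * p i) ∧ r.2 = - ∑ i, k i := by
  unfold GLrels at hr
  induction hr using AddSubgroup.closure_induction with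
  | mem x hx =>
    obtain ⟨i, rfl⟩ := hx
    refine ⟨Pi.single i 1, fun j => ?_, by simp⟩
    by_cases h : j = i
    · subst h; simp
    · simp [h]
  | zero => exact ⟨0, by simp, by simp⟩
  | add x y _ _ h1 h2 =>
    obtain ⟨k, hk, hk'⟩ := h1
    obtain ⟨l, hl, hl'⟩ := h2
    refine ⟨k + l, fun i => ?_, ?_⟩
    · simp [hk, hl, add_mul]
    · simp [hk', hl', Finset.sum_add_distrib]; ring
  | neg x _ h =>
    obtain ⟨k, hk, hk'⟩ := h
    exact ⟨-k, fun i => by simp [hk], by simp [hk']⟩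

theorem GLplus_exists (n : ℕ) (p : Fin n → ℕ) (x : GLgroup n p) (hx : x ∈ GLplus n p) :
    ∃ y : (Fin n → ℤ) × ℤ, 0 ≤ y ∧ (QuotientAddGroup.mk y : GLgroup n p) = x := by
  unfold GLplus at hx
  induction hx using AddSubmonoid.closure_induction with
  | mem x hx =>
    rcases hx with hx | ⟨i, rfl⟩
    · rw [Set.mem_singleton_iff] at hx
      exact ⟨(0, 1), Prod.mk_le_mk.2 ⟨le_rfl, by simp⟩, hx.symm⟩
    · exact ⟨(Pi.single i 1, 0), Prod.mk_le_mk.2 ⟨by simp, le_rfl⟩, rfl⟩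
  | zero => exact ⟨0, le_rfl, rfl⟩
  | add x y _ _ h1 h2 =>
    obtain ⟨u, hu, rfl⟩ := h1
    obtain ⟨v, hv, rfl⟩ := h2
    exact ⟨u + v, add_nonneg hu hv, rfl⟩

theorem GL_normal_mk (n : ℕ) (p : Fin n → ℕ) (a : Fin n → ℤ) (b : ℤ) :
    (∑ i, a i • GLx n p i) + b • GLc n p = (QuotientAddGroup.mk (a, b) : GLgroup n p) := by
  have h : ((a, b) : (Fin n → ℤ) × ℤ)
      = (∑ i, a i • ((Pi.single i 1, 0) : (Fin n → ℤ) × ℤ)) + b • ((0, 1) : (Fin n → ℤ) × ℤ) := by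
    ext j
    · simp [Prod.fst_sum, Finset.sum_apply, Pi.single_apply]
    · simp [Prod.snd_sum]
  rw [h]
  change _ = QuotientAddGroup.mk' (GLrels n p) _
  rw [map_add, map_sum, map_zsmul]
  simp only [map_zsmul]
  rfl

/-- If `x⃗ = Σ a_i x⃗_i + a c⃗` is in normal form (`0 ≤ a_i < p_i`), then
`x⃗ ∈ 𝕃_+` if and only if `a ≥ 0`. -/
theorem normal_form_nonneg_iff (d n : ℕ) (hd : 1 ≤ d) (p : Fin n → ℕ) (hp : ∀ i, 0 < p i)
    (a : Fin n → ℤ) (ha : ∀ i, 0 ≤ a i ∧ a i < (p i : ℤ)) (b : ℤ)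
    (x : GLgroup n p) (hx : x = (∑ i, a i • GLx n p i) + b • GLc n p) :
    x ∈ GLplus n p ↔ 0 ≤ b := by
  subst hx
  constructor
  · intro h
    obtain ⟨y, hy, hyx⟩ := GLplus_exists n p _ h
    rw [GL_normal_mk, QuotientAddGroup.eq] at hyx
    obtain ⟨k, hk, hk'⟩ := GLrels_exists n p _ hyx
    have hk0 : ∀ i, k i ≤ 0 := by
      intro i
      have h1 : -y.1 i + a i = k i * p i := by simpa using hk i
      have h2 : 0 ≤ y.1 i := hy.1 i
      have h3 := (ha i).2
      by_contra hc
      have : 1 ≤ k i := by omega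
      nlinarith [hp i]
    have h4 : -y.2 + b = - ∑ i, k i := by simpa using hk'
    have h5 : 0 ≤ y.2 := hy.2
    have h6 : ∑ i, k i ≤ 0 := Finset.sum_nonpos fun i _ => hk0 i
    omega
  · intro hb
    have key : ∀ (m : ℤ) (z : GLgroup n p), 0 ≤ m → z ∈ GLplus n p → m • z ∈ GLplus n p := by
      intro m z hm hz
      lift m to ℕ using hm
      rw [natCast_zsmul]
      exact AddSubmonoid.nsmul_mem _ hz m
    refine add_mem (sum_mem fun i _ => key _ _ (ha i).1 ?_) (key _ _ hb ?_)
    · exact AddSubmonoid.subset_closure (Or.inr ⟨i, rfl⟩)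
    · exact AddSubmonoid.subset_closure (Or.inl rfl)
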